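/- Let n ≥ 3 be an odd integer. The zero set of Ψ_n in ℝ² is the union of the diagonal D = {(x,x) : x ∈ ℝ} and of (n−1)/2 pairwise disjoint simple closed curves C_1, …, C_{(n−1)/2} (each C_m is a subset of ℝ² homeomorphic to the circle S¹). Moreover, the union of these curves intersects the diagonal D exactly at the (n−1) points (t_{n−1,i}, t_{n−1,i}), 1 ≤ i ≤ n−1, and intersects the anti-diagonal {(x,−x) : x ∈ ℝ} exactly at the (n−1) points (t_{n,i}, −t_{n,i}) with t_{n,i} ≠ 0. -/

import Mathlib

open Polynomial Real Set

/-- Physicists' Hermite polynomials: `H 0 = 1`, `H 1 = 2X`,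
`H (n+2) = 2X * H (n+1) - 2(n+1) * H n`. -/
noncomputable def hermiteH : ℕ → Polynomial ℝ
  | 0 => 1
  | 1 => Polynomial.C 2 * Polynomial.X
  | (n + 2) => Polynomial.C 2 * Polynomial.X * hermiteH (n + 1)
      - Polynomial.C ((2 * (n + 1) : ℕ) : ℝ) * hermiteH n

/-- `z : Fin m → ℝ` enumerates the zeros of `P` in increasing order. -/
def IsZeroEnum (P : Polynomial ℝ) (m : ℕ) (z : Fin m → ℝ) : Prop :=
  StrictMono z ∧ (∀ i, P.eval (z i) = 0) ∧ (∀ x : ℝ, P.eval x = 0 → ∃ i, x = z i)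

/-- The eigenfunction `Φ_n^θ`. -/
noncomputable def Phi (n : ℕ) (θ : ℝ) (p : ℝ × ℝ) : ℝ :=
  (Real.cos θ * (hermiteH n).eval p.1 + Real.sin θ * (hermiteH n).eval p.2) *
    Real.exp (-(p.1 ^ 2 + p.2 ^ 2) / 2)

/-- A critical zero of `u` : a common zero of `u` and its differential. -/
def IsCriticalZero (u : ℝ × ℝ → ℝ) (p : ℝ × ℝ) : Prop :=
  u p = 0 ∧ fderiv ℝ u p = 0

/-- Nodal set of `u`. -/
def nodalSet (u : ℝ × ℝ → ℝ) : Set (ℝ × ℝ) := {p | u p = 0}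

/-- The set of nodal domains of `u`, i.e. of connected components of the
complement of the nodal set. -/
def nodalDomains (u : ℝ × ℝ → ℝ) : Set (Set (ℝ × ℝ)) :=
  {C | ∃ p, u p ≠ 0 ∧ C = connectedComponentIn {q | u q ≠ 0} p}

/-- `Ψ_n(x,y) = H_n(x) - H_n(y)`. -/
noncomputable def Psi (n : ℕ) (p : ℝ × ℝ) : ℝ :=
  (hermiteH n).eval p.1 - (hermiteH n).eval p.2

/-!
Along the ray through `(1, s)` with `-1 ≤ s < 1`, the function `x ↦ H_n(x) - H_n(s x)` is an odd
polynomial of degree at most `n = 2k + 1`, so it has at most `k` positive zeros. The extremal values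
of `H_n` at its `k` positive critical points alternate in sign and, by Sonin's theorem, grow in
absolute value with the distance to the origin. Hence the function has the sign of `H_n(x)` when `x`
is one of these points, or a suitable further point, and the intermediate value theorem yields
exactly one zero between any two consecutive ones. By the symmetries of the square, off the diagonal
the nodal set has exactly one point on each ray in each of `k` square annuli; adding the two corners
of the inner square that lie on the diagonal gives a compact star-shaped curve, which radial
projection maps homeomorphically onto a circle.
-/

lemma injOn_Icc_of_deriv_ne_zero {f : ℝ → ℝ} {a b : ℝ} (hf : ContinuousOn f (Icc a b))
    (hderiv : ∀ x ∈ Ioo a b, deriv f x ≠ 0) : InjOn f (Icc a b) := by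
  intro x hx y hy hxy
  by_contra hne
  wlog hlt : x < y generalizing x y
  · exact this hy hx hxy.symm (Ne.symm hne) ((Ne.lt_or_gt hne).resolve_left hlt)
  obtain ⟨c, hc, hc0⟩ := exists_deriv_eq_zero hlt (hf.mono (Icc_subset_Icc hx.1 hy.2)) hxy
  exact hderiv c (Ioo_subset_Ioo hx.1 hy.2 hc) hc0

section IntermediateValue

variable {α : Type*} [ConditionallyCompleteLinearOrder α] [TopologicalSpace α] [OrderTopology α]
  [DenselyOrdered α] {a b : α}

lemma exists_mem_Ioo_eq_zero_of_mul_neg {f : α → ℝ} (hab : a ≤ b)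
    (hf : ContinuousOn f (Icc a b)) (hneg : f a * f b < 0) : ∃ x ∈ Ioo a b, f x = 0 := by
  rcases mul_neg_iff.mp hneg with ⟨ha, hb⟩ | ⟨ha, hb⟩
  · exact intermediate_value_Ioo' hab hf ⟨hb, ha⟩
  · exact intermediate_value_Ioo hab hf ⟨ha, hb⟩

lemma lt_of_isLocalMax_of_injOn_Icc {β : Type*} [LinearOrder β] [TopologicalSpace β]
    [OrderClosedTopology β] {f : α → β} (hab : a < b) (hf : ContinuousOn f (Icc a b))
    (hinj : InjOn f (Icc a b)) (hmax : IsLocalMax f a) : f b < f a := by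
  by_contra! hle
  have hmono := hf.strictMonoOn_of_injOn_Icc hab.le hle hinj
  have := nhdsGT_neBot_of_exists_gt ⟨b, hab⟩
  obtain ⟨x, hfx, hx⟩ :=
    ((hmax.filter_mono nhdsWithin_le_nhds).and (Ioo_mem_nhdsGT hab)).exists
  exact (hmono (left_mem_Icc.mpr hab.le) (Ioo_subset_Icc_self hx) hx.1).not_ge hfx

end IntermediateValue

/-- The second derivative test makes `a` a local maximum if `f a` is positive and a local minimum
if `f a` is negative. -/
lemma mul_sub_neg_of_mul_deriv_deriv_neg {f : ℝ → ℝ} {a b : ℝ} (hab : a < b)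
    (hf : ContinuousOn f (Icc a b)) (hinj : InjOn f (Icc a b)) (ha : ContinuousAt f a)
    (hderiv : deriv f a = 0) (hderiv2 : f a * deriv (deriv f) a < 0) :
    f a * (f b - f a) < 0 := by
  rcases mul_neg_iff.mp hderiv2 with ⟨hpos, hneg⟩ | ⟨hneg, hpos⟩
  · have hmax := isLocalMax_of_deriv_deriv_neg hneg hderiv ha
    exact mul_neg_of_pos_of_neg hpos (sub_neg.mpr (lt_of_isLocalMax_of_injOn_Icc hab hf hinj hmax))
  · have hmin := isLocalMin_of_deriv_deriv_pos hpos hderiv ha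
    exact mul_neg_of_neg_of_pos hneg
      (sub_pos.mpr (lt_of_isLocalMax_of_injOn_Icc (β := ℝᵒᵈ) hab hf hinj hmin))

lemma exists_gt_forall_mem_Ico_lt_of_tendsto_atTop {g : ℝ → ℝ} (hg : Continuous g)
    (htop : Filter.Tendsto g Filter.atTop Filter.atTop) (a c : ℝ) :
    ∃ b > a, ∀ y ∈ Ico c b, g y < g b := by
  obtain ⟨M, hM⟩ := (isCompact_Icc (a := c) (b := a)).bddAbove_image hg.continuousOn
  rw [mem_upperBounds, forall_mem_image] at hM
  let S : Set ℝ := Ici c ∩ g ⁻¹' Ici (M + 1)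
  have hSbdd : BddBelow S := ⟨c, fun x hx => hx.1⟩
  have hSne : S.Nonempty :=
    ((Filter.eventually_ge_atTop c).and (htop.eventually_ge_atTop (M + 1))).exists
  have hSclosed : IsClosed S := isClosed_Ici.inter (isClosed_Ici.preimage hg)
  obtain ⟨hcb, hgb⟩ : c ≤ sInf S ∧ M + 1 ≤ g (sInf S) := hSclosed.csInf_mem hSne hSbdd
  refine ⟨sInf S, ?_, fun y hy => ?_⟩
  · by_contra! hle
    linarith [hM ⟨hcb, hle⟩, hgb]
  · have hgy : ¬ M + 1 ≤ g y := fun h => notMem_of_lt_csInf hy.2 hSbdd ⟨hy.1, h⟩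
    exact (not_le.mp hgy).trans_le hgb

lemma strictMonoOn_eval_of_monotoneOn {R : Type*} [CommRing R] [IsDomain R] [LinearOrder R]
    [DenselyOrdered R] {P : R[X]} {s : Set R} (hs : s.OrdConnected)
    (hP : MonotoneOn (fun x => P.eval x) s) (hderiv : derivative P ≠ 0) :
    StrictMonoOn (fun x => P.eval x) s := by
  intro x hx y hy hxy
  refine (hP hx hy hxy.le).lt_of_ne fun heq => hderiv ?_
  have hconst : P = C (P.eval x) := by
    refine eq_of_infinite_eval_eq _ _ ((Icc_infinite hxy).mono fun w hw => ?_)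
    have hws := hs.out hx hy hw
    rw [mem_ofPred_eq, eval_C]
    exact le_antisymm ((hP hws hy hw.2).trans_eq heq.symm) (hP hx hws hw.1)
  rw [hconst, derivative_C]

section PositiveRoots

variable {R : Type*} [CommRing R] [IsDomain R] [LinearOrder R] [IsOrderedRing R]

lemma two_mul_card_pos_roots_le_natDegree {P : R[X]} (hneg : ∀ x, P.IsRoot x → P.IsRoot (-x)) :
    2 * (P.roots.toFinset.filter (0 < ·)).card ≤ P.natDegree := by
  set S := P.roots.toFinset.filter (0 < ·)
  have hdisj : Disjoint S (S.image Neg.neg) := by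
    rw [Finset.disjoint_left]
    intro x hx hx'
    obtain ⟨y, hy, rfl⟩ := Finset.mem_image.mp hx'
    exact lt_asymm (Finset.mem_filter.mp hy).2 (neg_pos.mp (Finset.mem_filter.mp hx).2)
  have hsub : S ∪ S.image Neg.neg ⊆ P.roots.toFinset := by
    refine Finset.union_subset (Finset.filter_subset _ _) (Finset.image_subset_iff.mpr ?_)
    intro x hx
    have hroot := Multiset.mem_toFinset.mp (Finset.mem_filter.mp hx).1
    rw [Multiset.mem_toFinset, mem_roots (ne_zero_of_mem_roots hroot)]
    exact hneg x (isRoot_of_mem_roots hroot)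
  calc 2 * S.card = (S ∪ S.image Neg.neg).card := by
        rw [Finset.card_union_of_disjoint hdisj, Finset.card_image_of_injective _ neg_injective,
          two_mul]
    _ ≤ P.roots.toFinset.card := Finset.card_le_card hsub
    _ ≤ P.natDegree := P.roots.toFinset_card_le.trans P.card_roots'

lemma exists_eq_of_pos_of_isRoot {P : R[X]} (hP : P ≠ 0) {k : ℕ} (hdeg : P.natDegree ≤ 2 * k + 1)
    (hneg : ∀ x, P.IsRoot x → P.IsRoot (-x)) {x : Fin k → R} (hinj : Function.Injective x)
    (hpos : ∀ j, 0 < x j) (hroot : ∀ j, P.IsRoot (x j)) {y : R} (hy : 0 < y)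
    (hPy : P.IsRoot y) : ∃ j, x j = y := by
  have hsub : Finset.univ.image x ⊆ P.roots.toFinset.filter (0 < ·) :=
    Finset.image_subset_iff.mpr fun j _ => by simp [hP, hpos j, (hroot j).eq_zero]
  have hcard : (P.roots.toFinset.filter (0 < ·)).card ≤ (Finset.univ.image x).card := by
    rw [Finset.card_image_of_injective _ hinj, Finset.card_fin]
    have := two_mul_card_pos_roots_le_natDegree hneg
    omega
  have hmem : y ∈ Finset.univ.image x := by
    rw [Finset.eq_of_subset_of_card_le hsub hcard]
    simp [hP, hy, hPy.eq_zero]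
  simpa using hmem

end PositiveRoots

section StarShaped

variable {E : Type*} [NormedAddCommGroup E] [NormedSpace ℝ E] {S : Set E}

lemma nonempty_homeomorph_sphere_of_existsUnique_smul_mem (hS : IsCompact S) (h0 : 0 ∉ S)
    (hray : ∀ v ≠ 0, ∃! c : ℝ, 0 < c ∧ c • v ∈ S) :
    Nonempty (S ≃ₜ Metric.sphere (0 : E) 1) := by
  let polar := homeomorphUnitSphereProd E
  have hS0 : S ⊆ {0}ᶜ := subset_compl_singleton_iff.mpr h0
  let direction : S → Metric.sphere (0 : E) 1 := fun p => (polar (inclusion hS0 p)).1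
  have hcont : Continuous direction := by fun_prop
  have hnorm : ∀ p : S, 0 < ‖(p : E)‖ := fun p => norm_pos_iff.mpr (hS0 p.2)
  have hcoe : ∀ p : S, ‖(p : E)‖ • (direction p : E) = p := fun p => by
    simp [direction, polar, (hnorm p).ne']
  have hne : ∀ v : Metric.sphere (0 : E) 1, (v : E) ≠ 0 :=
    fun v => ne_zero_of_mem_unit_sphere v
  have hbij : Function.Bijective direction := by
    constructor
    · intro p q hpq
      have hq := hcoe q
      rw [← hpq] at hq
      have heq : ‖(p : E)‖ = ‖(q : E)‖ := (hray _ (hne (direction p))).unique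
        ⟨hnorm p, (hcoe p).symm ▸ p.2⟩ ⟨hnorm q, hq.symm ▸ q.2⟩
      rw [← heq, hcoe p] at hq
      exact Subtype.ext hq
    · intro v
      obtain ⟨c, ⟨hc, hcv⟩, -⟩ := hray v (hne v)
      refine ⟨⟨c • v, hcv⟩, Subtype.ext ?_⟩
      simp [direction, polar, norm_smul, abs_of_pos hc, smul_smul, hc.ne']
  have : CompactSpace S := isCompact_iff_compactSpace.mp hS
  exact ⟨Continuous.homeoOfEquivCompactToT2 (f := Equiv.ofBijective direction hbij) hcont⟩

lemma nonempty_homeomorph_circle_of_existsUnique_smul_mem (hE : Module.finrank ℝ E = 2)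
    (hS : IsCompact S) (h0 : 0 ∉ S) (hray : ∀ v ≠ 0, ∃! c : ℝ, 0 < c ∧ c • v ∈ S) :
    Nonempty (S ≃ₜ Circle) := by
  have : FiniteDimensional ℝ E := Module.finite_of_finrank_eq_succ hE
  let e : E ≃L[ℝ] ℂ :=
    ContinuousLinearEquiv.ofFinrankEq (hE.trans Complex.finrank_real_complex.symm)
  have hmem : ∀ w, w ∈ e '' S ↔ e.symm w ∈ S := fun w => by
    rw [e.image_eq_preimage_symm, mem_preimage]
  obtain ⟨φ⟩ : Nonempty (e '' S ≃ₜ Metric.sphere (0 : ℂ) 1) := by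
    refine nonempty_homeomorph_sphere_of_existsUnique_smul_mem (hS.image e.continuous) ?_ ?_
    · rwa [hmem, map_zero]
    · intro w hw
      simp only [hmem, map_smul]
      exact hray _ (e.symm.map_ne_zero_iff.mpr hw)
  exact ⟨(e.toHomeomorph.image S).trans φ⟩

end StarShaped

/-- Up to the symmetries of the square, a nonzero point of the plane has the form `(c, c * s)`
with `0 < c` and `|s| ≤ 1`. -/
lemma forall_ne_zero_of_neg_of_swap {P : ℝ × ℝ → Prop} (neg : ∀ p, P (-p) → P p)
    (swap : ∀ p, P p.swap → P p) (base : ∀ c > 0, ∀ s ∈ Icc (-1 : ℝ) 1, P (c, c * s)) :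
    ∀ p ≠ 0, P p := by
  have hpos : ∀ x y : ℝ, 0 < x → |y| ≤ x → P (x, y) := fun x y hx hy => by
    have hs : y / x ∈ Icc (-1) 1 :=
      abs_le.mp (by rwa [abs_div, abs_of_pos hx, div_le_one hx])
    simpa only [mul_div_cancel₀ _ hx.ne'] using base x hx (y / x) hs
  have hfst : ∀ x y : ℝ, x ≠ 0 → |y| ≤ |x| → P (x, y) := fun x y hx hy => by
    rcases hx.lt_or_gt with hx | hx
    · rw [abs_of_neg hx] at hy
      exact neg _ (hpos (-x) (-y) (neg_pos.mpr hx) (by rwa [abs_neg]))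
    · exact hpos x y hx (by rwa [abs_of_pos hx] at hy)
  rintro ⟨x, y⟩ hp
  rcases le_total |y| |x| with h | h
  · exact hfst x y (by rintro rfl; simp_all) h
  · exact swap _ (hfst y x (by rintro rfl; simp_all) h)

lemma norm_mk_mul {c s : ℝ} (hc : 0 < c) (hs : s ∈ Icc (-1) 1) : ‖(c, c * s)‖ = c := by
  rw [Prod.norm_mk, norm_mul, Real.norm_of_nonneg hc.le, max_eq_left]
  exact mul_le_of_le_one_right hc.le (abs_le.mpr hs)

/-- The part of the level set `f x = f y` in the square annulus `a ≤ max |x| |y| ≤ b`. When `f` is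
odd and injective on `[a, b]`, the last condition only discards the points of the diagonal
outside the inner boundary, which makes the set closed; for `|y| ≤ x` it says `y ≤ a`. -/
def oval (f : ℝ[X]) (a b : ℝ) : Set (ℝ × ℝ) :=
  {p | f.eval p.1 = f.eval p.2 ∧ ‖p‖ ∈ Icc a b ∧ |p.1 + p.2| ≤ ‖p‖ + a}

section Oval

variable {f : ℝ[X]} {a b : ℝ}

lemma swap_mem_oval {p : ℝ × ℝ} : p.swap ∈ oval f a b ↔ p ∈ oval f a b := by
  simp only [oval, mem_ofPred_eq, Prod.norm_def, Prod.fst_swap, Prod.snd_swap,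
    eq_comm (a := f.eval p.2), max_comm ‖p.2‖, add_comm p.2]

lemma neg_mem_oval (hodd : ∀ x, f.eval (-x) = -f.eval x) {p : ℝ × ℝ} :
    -p ∈ oval f a b ↔ p ∈ oval f a b := by
  simp only [oval, mem_ofPred_eq, norm_neg, Prod.fst_neg, Prod.snd_neg, hodd, neg_inj,
    ← neg_add, abs_neg]

lemma zero_notMem_oval (ha : 0 < a) : 0 ∉ oval f a b := fun h0 =>
  ha.not_ge (by simpa using h0.2.1.1)

lemma mk_self_mem_oval_iff (hab : a ≤ b) {x : ℝ} : (x, x) ∈ oval f a b ↔ |x| = a := by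
  simp only [oval, mem_ofPred_eq, Prod.norm_mk, max_self, true_and, mem_Icc, Real.norm_eq_abs,
    ← two_mul, abs_mul, abs_two]
  constructor
  · rintro ⟨⟨hle, -⟩, hdiag⟩
    linarith
  · rintro rfl
    exact ⟨⟨le_rfl, hab⟩, (two_mul _).le⟩

lemma mk_mul_mem_oval (ha : 0 < a) (hinj : InjOn (fun x => f.eval x) (Icc a b)) {c s : ℝ}
    (hc : c ∈ Icc a b) (hs : s ∈ Ico (-1) 1) (heq : f.eval c = f.eval (c * s)) :
    (c, c * s) ∈ oval f a b := by
  have hc0 : 0 < c := ha.trans_le hc.1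
  have hnorm := norm_mk_mul hc0 (Ico_subset_Icc_self hs)
  have hlt : c * s < c := mul_lt_of_lt_one_right hc0 hs.2
  have hle : c * s ≤ a := by
    by_contra! hgt
    exact hlt.ne (hinj hc ⟨hgt.le, hlt.le.trans hc.2⟩ heq).symm
  refine ⟨heq, by rwa [hnorm], ?_⟩
  rw [hnorm]
  exact abs_le.mpr ⟨by nlinarith [hs.1], by linarith⟩

lemma isCompact_oval : IsCompact (oval f a b) := by
  apply Metric.isCompact_of_isClosed_isBounded
  · have hlevel : IsClosed {p : ℝ × ℝ | f.eval p.1 = f.eval p.2} :=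
      isClosed_eq (f.continuous.comp continuous_fst) (f.continuous.comp continuous_snd)
    have hdiag : IsClosed {p : ℝ × ℝ | |p.1 + p.2| ≤ ‖p‖ + a} :=
      isClosed_le (by fun_prop) (by fun_prop)
    exact hlevel.inter ((isClosed_Icc.preimage continuous_norm).inter hdiag)
  · exact (Metric.isBounded_closedBall (x := 0) (r := b)).subset fun p hp =>
      mem_closedBall_zero_iff.mpr hp.2.1.2

end Oval

/-- An odd polynomial of degree at most `2k + 1` that swings between values of opposite signs and
of growing size at the levels `u 0 < ⋯ < u k`, monotonically from each level to the next. -/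
structure IsGrowingOscillation {k : ℕ} (f : ℝ[X]) (u : Fin (k + 1) → ℝ) : Prop where
  natDegree_le : f.natDegree ≤ 2 * k + 1
  odd : ∀ x, f.eval (-x) = -f.eval x
  strictMono : StrictMono u
  pos : ∀ j, 0 < u j
  abs_eval_lt : ∀ j y, |y| < u j → |f.eval y| < |f.eval (u j)|
  eval_mul_eval_neg : ∀ j : Fin k, f.eval (u j.castSucc) * f.eval (u j.succ) < 0
  injOn : ∀ j : Fin k, InjOn (fun x => f.eval x) (Icc (u j.castSucc) (u j.succ))

namespace IsGrowingOscillation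

variable {k : ℕ} {f : ℝ[X]} {u : Fin (k + 1) → ℝ}

lemma castSucc_lt_succ (h : IsGrowingOscillation f u) (j : Fin k) : u j.castSucc < u j.succ :=
  h.strictMono j.castSucc_lt_succ

lemma eval_ne_zero (h : IsGrowingOscillation f u) (j : Fin (k + 1)) : f.eval (u j) ≠ 0 :=
  abs_pos.mp ((abs_nonneg (f.eval 0)).trans_lt (h.abs_eval_lt j 0 (by simpa using h.pos j)))

lemma sub_mul_eval_pos (h : IsGrowingOscillation f u) {s : ℝ} (hs : s ∈ Ico (-1) 1)
    (j : Fin (k + 1)) : 0 < (f.eval (u j) - f.eval (u j * s)) * f.eval (u j) := by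
  rcases hs.1.eq_or_lt with rfl | hs'
  · rw [mul_neg_one, h.odd]
    nlinarith [sq_pos_of_ne_zero (h.eval_ne_zero j)]
  · have hlt : |f.eval (u j * s)| < |f.eval (u j)| := by
      apply h.abs_eval_lt
      rw [abs_mul, abs_of_pos (h.pos j)]
      exact mul_lt_of_lt_one_right (h.pos j) (abs_lt.mpr ⟨hs', hs.2⟩)
    nlinarith [sq_lt_sq.mpr hlt, sq_nonneg (f.eval (u j) - f.eval (u j * s))]

lemma exists_mem_Ioo_eval_eq (h : IsGrowingOscillation f u) {s : ℝ} (hs : s ∈ Ico (-1) 1)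
    (j : Fin k) : ∃ x ∈ Ioo (u j.castSucc) (u j.succ), f.eval x = f.eval (x * s) := by
  have hcont : Continuous fun x => f.eval x - f.eval (x * s) := by fun_prop
  have hsign := mul_pos (h.sub_mul_eval_pos hs j.castSucc) (h.sub_mul_eval_pos hs j.succ)
  rw [mul_mul_mul_comm] at hsign
  obtain ⟨x, hx, hx0⟩ := exists_mem_Ioo_eq_zero_of_mul_neg (h.castSucc_lt_succ j).le
    hcont.continuousOn ((neg_iff_neg_of_mul_pos hsign).mpr (h.eval_mul_eval_neg j))
  exact ⟨x, hx, sub_eq_zero.mp hx0⟩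

/-- The `k` zeros of `x ↦ f x - f (x * s)` supplied by the intermediate value theorem exhaust its
positive zeros, because this odd polynomial has degree at most `2k + 1`. -/
lemma exists_forall_eval_eq_iff (h : IsGrowingOscillation f u) {s : ℝ} (hs : s ∈ Ico (-1) 1) :
    ∃ x : Fin k → ℝ, (∀ j, x j ∈ Ioo (u j.castSucc) (u j.succ)) ∧
      ∀ y > 0, f.eval y = f.eval (y * s) ↔ ∃ j, x j = y := by
  choose x hx hroot using h.exists_mem_Ioo_eval_eq hs
  refine ⟨x, hx, fun y hy => ⟨fun hfy => ?_, ?_⟩⟩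
  · let Q : ℝ[X] := f - f.comp (X * C s)
    have hQ : ∀ y, Q.eval y = f.eval y - f.eval (y * s) := fun y => by
      simp only [Q, eval_sub, eval_comp, eval_mul, eval_X, eval_C]
    have hQ0 : Q ≠ 0 := fun h0 => by
      simpa [← hQ, h0] using h.sub_mul_eval_pos hs 0
    have hdeg : Q.natDegree ≤ 2 * k + 1 := by
      refine natDegree_sub_le_iff_left (natDegree_comp_le.trans ?_) |>.mpr h.natDegree_le
      exact (Nat.mul_le_mul h.natDegree_le ((natDegree_mul_C_le X s).trans natDegree_X_le)).trans
        (mul_one _).le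
    have hneg : ∀ x, Q.IsRoot x → Q.IsRoot (-x) := fun x hx => by
      rw [IsRoot, hQ, neg_mul, h.odd, h.odd, ← neg_sub', ← hQ, hx.eq_zero, neg_zero]
    have hmono : StrictMono x := fun i j hij =>
      ((hx i).2.trans_le (h.strictMono.monotone (Fin.succ_le_castSucc_iff.mpr hij))).trans (hx j).1
    exact exists_eq_of_pos_of_isRoot hQ0 hdeg hneg hmono.injective
      (fun j => (h.pos _).trans (hx j).1) (fun j => by rw [IsRoot, hQ, hroot j, sub_self]) hy
      (by rw [IsRoot, hQ, hfy, sub_self])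
  · rintro ⟨j, rfl⟩
    exact hroot j

lemma existsUnique_mk_mul_mem_oval (h : IsGrowingOscillation f u) (j : Fin k) {s : ℝ}
    (hs : s ∈ Icc (-1) 1) : ∃! c, 0 < c ∧ (c, c * s) ∈ oval f (u j.castSucc) (u j.succ) := by
  rcases hs.2.eq_or_lt with rfl | hs'
  · simp only [mul_one, mk_self_mem_oval_iff (h.castSucc_lt_succ j).le]
    exact ⟨u j.castSucc, ⟨h.pos _, abs_of_pos (h.pos _)⟩,
      fun c ⟨hc, hcu⟩ => (abs_of_pos hc).symm.trans hcu⟩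
  · obtain ⟨x, hx, hx'⟩ := h.exists_forall_eval_eq_iff ⟨hs.1, hs'⟩
    have hxpos : 0 < x j := (h.pos _).trans (hx j).1
    refine ⟨x j, ⟨hxpos, mk_mul_mem_oval (h.pos _) (h.injOn j) (Ioo_subset_Icc_self (hx j))
      ⟨hs.1, hs'⟩ ((hx' _ hxpos).mpr ⟨j, rfl⟩)⟩, ?_⟩
    rintro c ⟨hc, heq, hnorm, -⟩
    rw [norm_mk_mul hc hs] at hnorm
    obtain ⟨i, rfl⟩ := (hx' c hc).mp heq
    have hij := Fin.castSucc_lt_succ_iff.mp (h.strictMono.lt_iff_lt.mp ((hx i).1.trans_le hnorm.2))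
    have hji := Fin.castSucc_lt_succ_iff.mp (h.strictMono.lt_iff_lt.mp (hnorm.1.trans_lt (hx i).2))
    rw [le_antisymm hij hji]

lemma existsUnique_smul_mem_oval (h : IsGrowingOscillation f u) (j : Fin k) :
    ∀ v ≠ (0 : ℝ × ℝ), ∃! c : ℝ, 0 < c ∧ c • v ∈ oval f (u j.castSucc) (u j.succ) := by
  apply forall_ne_zero_of_neg_of_swap
  · simp only [smul_neg, neg_mem_oval h.odd, imp_self, implies_true]
  · simp only [← Prod.smul_swap, swap_mem_oval, imp_self, implies_true]
  · intro a ha s hs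
    refine ((Equiv.mulRight₀ a ha.ne').existsUnique_congr fun c => ?_).mpr
      (h.existsUnique_mk_mul_mem_oval j hs)
    simp [mul_assoc, ha]

lemma nonempty_oval_homeomorph_circle (h : IsGrowingOscillation f u) (j : Fin k) :
    Nonempty (oval f (u j.castSucc) (u j.succ) ≃ₜ Circle) :=
  nonempty_homeomorph_circle_of_existsUnique_smul_mem (by simp) isCompact_oval
    (zero_notMem_oval (h.pos _)) (h.existsUnique_smul_mem_oval j)

lemma norm_ne_of_eval_eq (h : IsGrowingOscillation f u) {p : ℝ × ℝ} (hp : p.1 ≠ p.2)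
    (heq : f.eval p.1 = f.eval p.2) (j : Fin (k + 1)) : ‖p‖ ≠ u j := by
  have hp0 : p ≠ 0 := by rintro rfl; exact hp rfl
  refine forall_ne_zero_of_neg_of_swap
    (P := fun p => p.1 ≠ p.2 → f.eval p.1 = f.eval p.2 → ‖p‖ ≠ u j) ?_ ?_ ?_ p hp0 hp heq
  · intro p hP hne heq
    simpa only [norm_neg] using hP (by simpa using hne) (by simpa [h.odd] using heq)
  · intro p hP hne heq
    simpa only [Prod.norm_def, Prod.fst_swap, Prod.snd_swap, max_comm] using
      hP hne.symm heq.symm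
  · intro c hc s hs hne heq hcu
    rw [norm_mk_mul hc hs] at hcu
    subst hcu
    have hs1 : s < 1 := hs.2.lt_of_ne (by rintro rfl; simp at hne)
    exact (left_ne_zero_of_mul (h.sub_mul_eval_pos ⟨hs.1, hs1⟩ j).ne') (sub_eq_zero.mpr heq)

lemma exists_mem_oval (h : IsGrowingOscillation f u) {p : ℝ × ℝ} (hp : p.1 ≠ p.2)
    (heq : f.eval p.1 = f.eval p.2) : ∃ j : Fin k, p ∈ oval f (u j.castSucc) (u j.succ) := by
  have hp0 : p ≠ 0 := by rintro rfl; exact hp rfl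
  refine forall_ne_zero_of_neg_of_swap (P := fun p => p.1 ≠ p.2 → f.eval p.1 = f.eval p.2 →
    ∃ j : Fin k, p ∈ oval f (u j.castSucc) (u j.succ)) ?_ ?_ ?_ p hp0 hp heq
  · intro p hP hne heq
    simpa only [neg_mem_oval h.odd] using hP (by simpa using hne) (by simpa [h.odd] using heq)
  · intro p hP hne heq
    simpa only [swap_mem_oval] using hP hne.symm heq.symm
  · intro c hc s hs hne heq
    have hs' : s ∈ Ico (-1) 1 := ⟨hs.1, hs.2.lt_of_ne (by rintro rfl; simp at hne)⟩
    obtain ⟨x, hx, hx'⟩ := h.exists_forall_eval_eq_iff hs'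
    obtain ⟨j, rfl⟩ := (hx' c hc).mp heq
    exact ⟨j, mk_mul_mem_oval (h.pos _) (h.injOn j) (Ioo_subset_Icc_self (hx j)) hs' heq⟩

lemma pairwise_disjoint_oval (h : IsGrowingOscillation f u) :
    Pairwise fun i j : Fin k =>
      Disjoint (oval f (u i.castSucc) (u i.succ)) (oval f (u j.castSucc) (u j.succ)) := by
  refine (pairwise_disjoint_on _).mpr fun i j hij => Set.disjoint_left.mpr fun p hi hj => ?_
  by_cases hp : p.1 = p.2
  · obtain ⟨x, y⟩ := p
    obtain rfl : x = y := hp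
    rw [mk_self_mem_oval_iff (h.castSucc_lt_succ _).le] at hi hj
    exact (h.strictMono (Fin.castSucc_lt_castSucc_iff.mpr hij)).ne (hi.symm.trans hj)
  · refine h.norm_ne_of_eval_eq hp hi.1 j.castSucc (le_antisymm ?_ hj.2.1.1)
    exact hi.2.1.2.trans (h.strictMono.monotone (Fin.succ_le_castSucc_iff.mpr hij))

lemma setOf_eval_eq (h : IsGrowingOscillation f u) :
    {p : ℝ × ℝ | f.eval p.1 = f.eval p.2} =
      {p | p.1 = p.2} ∪ ⋃ j : Fin k, oval f (u j.castSucc) (u j.succ) := by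
  ext p
  simp only [mem_union, mem_iUnion, mem_ofPred_eq]
  constructor
  · exact fun heq => or_iff_not_imp_left.mpr fun hp => h.exists_mem_oval hp heq
  · rintro (hp | ⟨j, hp⟩)
    exacts [congrArg f.eval hp, hp.1]

lemma iUnion_oval_inter_diagonal (h : IsGrowingOscillation f u) :
    (⋃ j : Fin k, oval f (u j.castSucc) (u j.succ)) ∩ {p | p.1 = p.2} =
      {p | ∃ j : Fin k, |p.1| = u j.castSucc ∧ p.1 = p.2} := by
  ext ⟨x, y⟩
  simp only [mem_inter_iff, mem_iUnion, mem_ofPred_eq, exists_and_right]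
  refine and_congr_left ?_
  rintro rfl
  simp only [mk_self_mem_oval_iff (h.castSucc_lt_succ _).le]

lemma iUnion_oval_inter_antidiagonal (h : IsGrowingOscillation f u) :
    (⋃ j : Fin k, oval f (u j.castSucc) (u j.succ)) ∩ {p | p.2 = -p.1} =
      {p | f.eval p.1 = 0 ∧ p.1 ≠ 0 ∧ p.2 = -p.1} := by
  ext ⟨x, y⟩
  simp only [mem_inter_iff, mem_iUnion, mem_ofPred_eq, ← and_assoc]
  refine and_congr_left ?_
  rintro rfl
  constructor
  · rintro ⟨j, hj⟩
    refine ⟨self_eq_neg.mp (hj.1.trans (h.odd x)), ?_⟩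
    rintro rfl
    rw [neg_zero] at hj
    exact zero_notMem_oval (h.pos _) hj
  · rintro ⟨hx, hx0⟩
    exact h.exists_mem_oval (fun heq => hx0 (self_eq_neg.mp heq)) (by rw [h.odd, hx, neg_zero])

end IsGrowingOscillation

namespace IsZeroEnum

variable {P : ℝ[X]} {m k : ℕ}

lemma eval_eq_zero_iff {z : Fin m → ℝ} (hz : IsZeroEnum P m z) {x : ℝ} :
    P.eval x = 0 ↔ ∃ i, x = z i :=
  ⟨hz.2.2 x, by rintro ⟨i, rfl⟩; exact hz.2.1 i⟩

lemma rev_eq_neg {z : Fin m → ℝ} (hz : IsZeroEnum P m z)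
    (hP : ∀ x, P.eval x = 0 → P.eval (-x) = 0) (i : Fin m) : z i.rev = -z i := by
  have hmono : StrictMono fun i : Fin m => -z i.rev := fun i j hij =>
    neg_lt_neg (hz.1 (Fin.rev_lt_rev.mpr hij))
  have hrange : range (fun i : Fin m => -z i.rev) = range z := by
    apply Subset.antisymm
    · rintro _ ⟨i, rfl⟩
      obtain ⟨l, hl⟩ := hz.2.2 _ (hP _ (hz.2.1 i.rev))
      exact ⟨l, hl.symm⟩
    · rintro _ ⟨i, rfl⟩
      obtain ⟨l, hl⟩ := hz.2.2 _ (hP _ (hz.2.1 i))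
      exact ⟨l.rev, by simp [← hl]⟩
  exact neg_eq_iff_eq_neg.mp (congrFun ((hmono.range_inj hz.1).mp hrange) i)

lemma exists_pos_forall_eval_eq_zero_iff {z : Fin (2 * k) → ℝ} (hz : IsZeroEnum P (2 * k) z)
    (hP : ∀ x, P.eval x = 0 → P.eval (-x) = 0) :
    ∃ v : Fin k → ℝ, StrictMono v ∧ (∀ j, 0 < v j) ∧ ∀ x, P.eval x = 0 ↔ ∃ j, |x| = v j := by
  have hrev := hz.rev_eq_neg hP
  have hpos : ∀ i : Fin (2 * k), k ≤ i → 0 < z i := fun i hi => by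
    have hlt : i.rev < i := by rw [Fin.lt_def, Fin.val_rev]; omega
    linarith [hz.1 hlt, hrev i]
  refine ⟨fun j => z ⟨k + j, by omega⟩, fun i j hij => hz.1 (by simpa using hij),
    fun j => hpos _ (Nat.le_add_right _ _), fun x => ⟨fun hx => ?_, ?_⟩⟩
  · obtain ⟨i, hi⟩ := hz.2.2 |x| (by rcases abs_choice x with h | h <;> simp [h, hx, hP])
    have hki : k ≤ i := by
      by_contra! hlt
      have hirev := hpos i.rev (by rw [Fin.val_rev]; omega)
      linarith [hrev i, abs_nonneg x]
    exact ⟨⟨i - k, by omega⟩, by simp [hi, Nat.add_sub_cancel' hki]⟩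
  · rintro ⟨j, hj⟩
    have h0 : P.eval |x| = 0 := hj ▸ hz.2.1 _
    rcases abs_choice x with h | h <;> rw [h] at h0
    exacts [h0, neg_neg x ▸ hP _ h0]

end IsZeroEnum

lemma hermiteH_add_two (n : ℕ) :
    hermiteH (n + 2) = 2 * (X : ℝ[X]) * hermiteH (n + 1) - 2 * (n + 1) * hermiteH n := by
  simp [hermiteH, map_ofNat]

lemma derivative_hermiteH_succ (n : ℕ) :
    derivative (hermiteH (n + 1)) = 2 * (n + 1) * hermiteH n := by
  induction n using Nat.twoStepInduction with
  | zero => simp [hermiteH, map_ofNat]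
  | one =>
    simp only [hermiteH, map_ofNat, zero_add, mul_one, Nat.cast_ofNat, derivative_sub,
      derivative_mul, derivative_ofNat, zero_mul, derivative_X, sub_zero, Nat.cast_one]
    ring
  | more n ih1 ih2 =>
    rw [hermiteH_add_two]
    simp only [derivative_sub, derivative_mul, ih1, ih2, derivative_add, derivative_ofNat,
      derivative_X, derivative_natCast, derivative_one]
    rw [hermiteH_add_two n]
    push_cast
    ring

lemma hermiteH_succ (n : ℕ) :
    hermiteH (n + 1) = 2 * X * hermiteH n - derivative (hermiteH n) := by
  cases n with
  | zero => simp [hermiteH, map_ofNat]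
  | succ n => rw [hermiteH_add_two, derivative_hermiteH_succ]

lemma eval_neg_hermiteH (n : ℕ) (x : ℝ) :
    (hermiteH n).eval (-x) = (-1) ^ n * (hermiteH n).eval x := by
  induction n using Nat.twoStepInduction with
  | zero => simp [hermiteH]
  | one => simp [hermiteH]
  | more n ih1 ih2 =>
    simp only [hermiteH, eval_sub, eval_mul, eval_C, eval_X, ih1, ih2]
    ring

lemma abs_eval_abs_hermiteH (n : ℕ) (x : ℝ) :
    |(hermiteH n).eval (|x|)| = |(hermiteH n).eval x| := by
  rcases abs_choice x with h | h <;> simp [h, eval_neg_hermiteH, abs_mul]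

lemma degree_hermiteH (n : ℕ) : (hermiteH n).degree = (n : WithBot ℕ) := by
  induction n using Nat.twoStepInduction with
  | zero => simp [hermiteH]
  | one => simp [hermiteH]
  | more n ih1 ih2 =>
    have hlead : (C 2 * X * hermiteH (n + 1)).degree = ((n + 2 : ℕ) : WithBot ℕ) := by
      rw [degree_mul, degree_C_mul_X two_ne_zero, ih2]
      norm_cast
      omega
    rw [hermiteH, degree_sub_eq_left_of_degree_lt, hlead]
    rw [hlead, degree_C_mul (by positivity), ih1]
    exact_mod_cast Nat.lt_add_of_pos_right (n := n) two_pos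

lemma hermiteH_ne_zero (n : ℕ) : hermiteH n ≠ 0 := by
  rw [← degree_ne_bot, degree_hermiteH]
  exact WithBot.natCast_ne_bot n

/-- Sonin's function for `H_{n+1}`, with `H_n` in place of the derivative of `H_{n+1}`. It increases
with `|x|` and bounds `H_{n+1}(x) ^ 2` from above, with equality at the zeros of `H_n`. -/
noncomputable def hermiteEnergy (n : ℕ) : ℝ[X] :=
  hermiteH (n + 1) ^ 2 + 2 * (n + 1) * hermiteH n ^ 2

lemma derivative_hermiteEnergy (n : ℕ) :
    derivative (hermiteEnergy n) = 8 * (n + 1) * (X : ℝ[X]) * hermiteH n ^ 2 := by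
  simp only [hermiteEnergy, derivative_add, derivative_mul, derivative_sq,
    derivative_hermiteH_succ, derivative_ofNat, derivative_natCast, derivative_one, map_ofNat]
  linear_combination 4 * ((n : ℝ[X]) + 1) * hermiteH n * hermiteH_succ n

lemma strictMonoOn_eval_hermiteEnergy (n : ℕ) :
    StrictMonoOn (fun x => (hermiteEnergy n).eval x) (Ici 0) := by
  refine strictMonoOn_eval_of_monotoneOn ordConnected_Ici ?_ ?_
  · refine monotoneOn_of_deriv_nonneg (convex_Ici 0) (by fun_prop) (by fun_prop) fun x hx => ?_
    rw [interior_Ici] at hx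
    have hx0 : 0 < x := hx
    rw [Polynomial.deriv, derivative_hermiteEnergy]
    simp only [eval_mul, eval_add, eval_ofNat, eval_natCast, eval_one, eval_X, eval_pow]
    positivity
  · rw [derivative_hermiteEnergy]
    have : (n : ℝ[X]) + 1 ≠ 0 := n.cast_add_one_ne_zero
    simp [this, hermiteH_ne_zero]

lemma abs_eval_hermiteH_succ_lt {n : ℕ} {t y : ℝ} (ht : (hermiteH n).eval t = 0) (hy : |y| < t) :
    |(hermiteH (n + 1)).eval y| < |(hermiteH (n + 1)).eval t| := by
  have henergy : ∀ x, (hermiteEnergy n).eval x =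
      (hermiteH (n + 1)).eval x ^ 2 + 2 * (n + 1) * (hermiteH n).eval x ^ 2 := fun x => by
    simp [hermiteEnergy]
  rw [← abs_eval_abs_hermiteH, ← sq_lt_sq]
  have hlt := strictMonoOn_eval_hermiteEnergy n (abs_nonneg y) ((abs_nonneg y).trans hy.le) hy
  simp only [henergy, ht] at hlt
  have hnonneg : 0 ≤ 2 * (n + 1) * (hermiteH n).eval |y| ^ 2 := by positivity
  linarith

lemma eval_hermiteH_succ_mul_neg {n : ℕ} {a b : ℝ} (hab : a < b) (ha : (hermiteH n).eval a = 0)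
    (hinj : InjOn (fun x => (hermiteH (n + 1)).eval x) (Icc a b))
    (hlt : |(hermiteH (n + 1)).eval a| < |(hermiteH (n + 1)).eval b|)
    (ha0 : (hermiteH (n + 1)).eval a ≠ 0) :
    (hermiteH (n + 1)).eval a * (hermiteH (n + 1)).eval b < 0 := by
  have hderiv : deriv (fun x => (hermiteH (n + 1)).eval x) =
      fun x => 2 * (n + 1) * (hermiteH n).eval x := by
    ext x
    simp [derivative_hermiteH_succ]
  have hderiv2 : deriv (deriv fun x => (hermiteH (n + 1)).eval x) a =
      -(2 * (n + 1) * (hermiteH (n + 1)).eval a) := by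
    rw [hderiv, hermiteH_succ]
    simp [ha]
  have hconcave : (hermiteH (n + 1)).eval a *
      deriv (deriv fun x => (hermiteH (n + 1)).eval x) a < 0 := by
    rw [hderiv2]
    nlinarith [sq_pos_of_ne_zero ha0, n.cast_nonneg (α := ℝ)]
  have hturn := mul_sub_neg_of_mul_deriv_deriv_neg hab (by fun_prop) hinj (by fun_prop)
    (by simp only [hderiv, ha, mul_zero]) hconcave
  by_contra! hnonneg
  have habs := mul_lt_mul_of_pos_left hlt (abs_pos.mpr ha0)
  rw [← abs_mul, ← abs_mul, abs_of_nonneg hnonneg, abs_mul_self] at habs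
  linarith

lemma isGrowingOscillation_hermiteH {k : ℕ} {u : Fin (k + 1) → ℝ} (hmono : StrictMono u)
    (hpos : ∀ j, 0 < u j)
    (hcrit : ∀ x, (hermiteH (2 * k)).eval x = 0 ↔ ∃ j : Fin k, |x| = u j.castSucc)
    (hlast : ∀ y, |y| < u (Fin.last k) →
      |(hermiteH (2 * k + 1)).eval y| < |(hermiteH (2 * k + 1)).eval (u (Fin.last k))|) :
    IsGrowingOscillation (hermiteH (2 * k + 1)) u := by
  have hzero : ∀ j : Fin k, (hermiteH (2 * k)).eval (u j.castSucc) = 0 := fun j =>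
    (hcrit _).mpr ⟨j, abs_of_pos (hpos _)⟩
  have habs : ∀ j y, |y| < u j →
      |(hermiteH (2 * k + 1)).eval y| < |(hermiteH (2 * k + 1)).eval (u j)| :=
    Fin.lastCases hlast fun j y => abs_eval_hermiteH_succ_lt (hzero j)
  have hinj : ∀ j : Fin k,
      InjOn (fun x => (hermiteH (2 * k + 1)).eval x) (Icc (u j.castSucc) (u j.succ)) := by
    refine fun j => injOn_Icc_of_deriv_ne_zero (by fun_prop) fun x hx => ?_
    have hx0 : (hermiteH (2 * k)).eval x ≠ 0 := fun h0 => by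
      obtain ⟨i, hi⟩ := (hcrit x).mp h0
      rw [abs_of_pos ((hpos _).trans hx.1)] at hi
      subst hi
      have hji := hmono.lt_iff_lt.mp hx.1
      have hij := hmono.lt_iff_lt.mp hx.2
      exact hij.not_ge (Fin.succ_le_castSucc_iff.mpr (Fin.castSucc_lt_castSucc_iff.mp hji))
    rw [Polynomial.deriv, derivative_hermiteH_succ]
    simp only [eval_mul, eval_add, eval_ofNat, eval_natCast, eval_one]
    exact mul_ne_zero (by positivity) hx0
  exact
    { natDegree_le := (natDegree_eq_of_degree_eq_some (degree_hermiteH _)).le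
      odd := fun x => by rw [eval_neg_hermiteH, Odd.neg_one_pow ⟨k, rfl⟩, neg_one_mul]
      strictMono := hmono
      pos := hpos
      abs_eval_lt := habs
      eval_mul_eval_neg := fun j =>
        eval_hermiteH_succ_mul_neg (hmono j.castSucc_lt_succ) (hzero j) (hinj j)
          (habs _ _ (by rw [abs_of_pos (hpos _)]; exact hmono j.castSucc_lt_succ))
          (abs_pos.mp ((abs_nonneg _).trans_lt (habs _ 0 (by simpa using hpos _))))
      injOn := hinj }

lemma exists_isGrowingOscillation_hermiteH {k : ℕ} {z : Fin (2 * k) → ℝ}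
    (hz : IsZeroEnum (hermiteH (2 * k)) (2 * k) z) :
    ∃ u : Fin (k + 1) → ℝ, IsGrowingOscillation (hermiteH (2 * k + 1)) u ∧
      ∀ x, (∃ j : Fin k, |x| = u j.castSucc) ↔ ∃ i, x = z i := by
  obtain ⟨v, hmono, hpos, hv⟩ := hz.exists_pos_forall_eval_eq_zero_iff fun x hx => by
    rw [eval_neg_hermiteH, hx, mul_zero]
  obtain ⟨a, ha⟩ := (finite_range v).bddAbove
  have htop := (hermiteH (2 * k + 1)).abs_tendsto_atTop (by rw [degree_hermiteH]; norm_cast; omega)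
  obtain ⟨b, hmax, hb⟩ :=
    exists_gt_forall_mem_Ico_lt_of_tendsto_atTop (by fun_prop) htop (max a 0) 0
  obtain ⟨hab, hb0⟩ := max_lt_iff.mp hmax
  have hvb : ∀ j, v j < b := fun j => (ha (mem_range_self j)).trans_lt hab
  refine ⟨Fin.snoc v b, isGrowingOscillation_hermiteH ?_ ?_ ?_ ?_, fun x => ?_⟩
  · rw [← Fin.insertNth_last', Fin.strictMono_insertNth_iff]
    simp [hmono, hvb]
  · exact Fin.lastCases (by simpa using hb0) (by simpa using hpos)
  · simpa using hv
  · intro y hy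
    rw [Fin.snoc_last] at hy ⊢
    rw [← abs_eval_abs_hermiteH]
    exact hb |y| ⟨abs_nonneg y, hy⟩
  · simp only [Fin.snoc_castSucc, ← hv, hz.eval_eq_zero_iff]

/-- For odd `n ≥ 3`, the zero set of `Ψ_n` is the union of the
diagonal and `(n-1)/2` pairwise disjoint simple closed curves; the union of
these curves meets the diagonal exactly at the points `(t_{n-1,i}, t_{n-1,i})`
and the anti-diagonal exactly at the points `(t_{n,i}, -t_{n,i})` with
`t_{n,i} ≠ 0`. -/
theorem nodal_set_of_Psi_structure
    (n : ℕ) (hn3 : 3 ≤ n) (hodd : Odd n)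
    (tz : Fin (n - 1) → ℝ) (htz : IsZeroEnum (hermiteH (n - 1)) (n - 1) tz)
    (tn : Fin n → ℝ) (htn : IsZeroEnum (hermiteH n) n tn) :
    ∃ Curves : Fin ((n - 1) / 2) → Set (ℝ × ℝ),
      (∀ m, Nonempty ((Curves m) ≃ₜ Circle)) ∧
      (Pairwise fun m m' => Disjoint (Curves m) (Curves m')) ∧
      ({p : ℝ × ℝ | Psi n p = 0} = {p : ℝ × ℝ | p.1 = p.2} ∪ ⋃ m, Curves m) ∧
      ((⋃ m, Curves m) ∩ {p : ℝ × ℝ | p.1 = p.2}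
        = {p : ℝ × ℝ | ∃ i, p = (tz i, tz i)}) ∧
      ((⋃ m, Curves m) ∩ {p : ℝ × ℝ | p.2 = -p.1}
        = {p : ℝ × ℝ | ∃ i, tn i ≠ 0 ∧ p = (tn i, -(tn i))}) := by
  obtain ⟨k, rfl⟩ := hodd
  obtain ⟨u, h, hu⟩ := exists_isGrowingOscillation_hermiteH htz
  rw [show (2 * k + 1 - 1) / 2 = k by omega]
  refine ⟨fun j => oval (hermiteH (2 * k + 1)) (u j.castSucc) (u j.succ),
    h.nonempty_oval_homeomorph_circle, h.pairwise_disjoint_oval, ?_, ?_, ?_⟩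
  · simpa only [Psi, sub_eq_zero] using h.setOf_eval_eq
  · rw [h.iUnion_oval_inter_diagonal]
    ext ⟨x, y⟩
    simp only [mem_ofPred_eq, exists_and_right, hu, Prod.mk.injEq]
    grind
  · rw [h.iUnion_oval_inter_antidiagonal]
    ext ⟨x, y⟩
    simp only [mem_ofPred_eq, htn.eval_eq_zero_iff, Prod.mk.injEq]
    grind
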